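/- arXiv:2101.07227 — 5 statements merged into one kernel-verified Lean document; each statement's English description precedes it below -/
import Mathlib

section
/- Let R be a commutative ring, J an ideal of R, and n a positive integer. If A and B are invertible n×n matrices over R such that every entry of A − 1 and of B − 1 lies in J (where 1 denotes the identity matrix), then every entry of the commutator A·B·A⁻¹·B⁻¹ − 1 lies in J². -/
/-! With `X = A - 1` and `Y = B - 1`, one has `A * B - B * A = X * Y - Y * X`, so
`A * B * A⁻¹ * B⁻¹ - 1 = (X * Y - Y * X) * (A⁻¹ * B⁻¹)`. The entries of `X * Y - Y * X` lie in
`J ^ 2`, and multiplying by any matrix on the right keeps them there. -/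

/-- Let `R` be a commutative ring, `J` an ideal of `R`, and `n ≥ 1`. If
`A` and `B` are invertible `n × n` matrices over `R` congruent to the identity modulo `J`
(all entries of `A - 1` and `B - 1` lie in `J`), then the commutator `A*B*A⁻¹*B⁻¹` is
congruent to the identity modulo `J²`. -/
theorem stmt6 (R : Type*) [CommRing R] (J : Ideal R) (n : ℕ) (hn : 0 < n)
    (A B : GL (Fin n) R)
    (hA : ∀ i j, ((A : Matrix (Fin n) (Fin n) R) - 1) i j ∈ J)
    (hB : ∀ i j, ((B : Matrix (Fin n) (Fin n) R) - 1) i j ∈ J) :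
    ∀ i j, (((A * B * A⁻¹ * B⁻¹ : GL (Fin n) R) : Matrix (Fin n) (Fin n) R) - 1) i j
      ∈ J ^ 2 := by
  have key : ((A * B * A⁻¹ * B⁻¹ : GL (Fin n) R) : Matrix (Fin n) (Fin n) R) - 1
      = (((A : Matrix (Fin n) (Fin n) R) - 1) * ((B : Matrix (Fin n) (Fin n) R) - 1)
          - ((B : Matrix (Fin n) (Fin n) R) - 1) * ((A : Matrix (Fin n) (Fin n) R) - 1))
        * ((A⁻¹ * B⁻¹ : GL (Fin n) R) : Matrix (Fin n) (Fin n) R) := by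
    have h1 : ((B * A * (A⁻¹ * B⁻¹) : GL (Fin n) R) : Matrix (Fin n) (Fin n) R) = 1 := by
      rw [show B * A * (A⁻¹ * B⁻¹) = 1 by group, Units.val_one]
    have h2 : A * B * A⁻¹ * B⁻¹ = A * B * (A⁻¹ * B⁻¹) := by group
    have h3 : ((A : Matrix (Fin n) (Fin n) R) - 1) * ((B : Matrix (Fin n) (Fin n) R) - 1)
          - ((B : Matrix (Fin n) (Fin n) R) - 1) * ((A : Matrix (Fin n) (Fin n) R) - 1)
        = (A : Matrix (Fin n) (Fin n) R) * B - (B : Matrix (Fin n) (Fin n) R) * A := by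
      noncomm_ring
    rw [h3, ← h1, h2, Units.val_mul (A * B), Units.val_mul (B * A), ← sub_mul,
      Units.val_mul A B, Units.val_mul B A]
  intro i j
  rw [key, Matrix.mul_apply]
  refine Ideal.sum_mem _ fun k _ => Ideal.mul_mem_right _ _ ?_
  rw [Matrix.sub_apply, Matrix.mul_apply, Matrix.mul_apply, pow_two]
  exact Ideal.sub_mem _
    (Ideal.sum_mem _ fun l _ => Ideal.mul_mem_mul (hA _ _) (hB _ _))
    (Ideal.sum_mem _ fun l _ => Ideal.mul_mem_mul (hB _ _) (hA _ _))
end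

section
/- Let Γ be a group, let k and m be natural numbers, and suppose that Γ has a subgroup H of finite index which is generated by at most k elements. If every finite quotient of Γ is generated by at most m elements (that is, for every normal subgroup N of Γ with Γ/N finite, d(Γ/N) ≤ m), then Γ is generated by at most k + m elements. -/
/-!
Let `N` be the normal core of `H`, a finite-index normal subgroup of `Γ`. The generators of `H`
together with lifts of generators of `Γ ⧸ N` generate `Γ`: the subgroup they generate contains
`H ≥ N` and surjects onto `Γ ⧸ N`.
-/

/-- Let `Γ` be a group with a finite-index subgroup `H` generated by at
most `k` elements. If every finite quotient of `Γ` is generated by at most `m` elements,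
then `Γ` is generated by at most `k + m` elements. -/
theorem stmt10 (Γ : Type*) [Group Γ] (k m : ℕ) (H : Subgroup Γ) (hHfi : H.FiniteIndex)
    (hHgen : ∃ S : Finset H, S.card ≤ k ∧ Subgroup.closure (S : Set H) = ⊤)
    (hquot : ∀ (N : Subgroup Γ) [N.Normal], Finite (Γ ⧸ N) →
      ∃ S : Finset (Γ ⧸ N), S.card ≤ m ∧ Subgroup.closure (S : Set (Γ ⧸ N)) = ⊤) :
    ∃ S : Finset Γ, S.card ≤ k + m ∧ Subgroup.closure (S : Set Γ) = ⊤ := by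
  classical
  obtain ⟨S, hS, hSgen⟩ := hHgen
  obtain ⟨T, hT, hTgen⟩ := hquot H.normalCore inferInstance
  refine ⟨S.image H.subtype ∪ T.image Quotient.out, ?_, ?_⟩
  · exact (Finset.card_union_le _ _).trans
      (add_le_add (Finset.card_image_le.trans hS) (Finset.card_image_le.trans hT))
  · set K := Subgroup.closure
      ((S.image H.subtype ∪ T.image Quotient.out : Finset Γ) : Set Γ) with hK
    have hHK : H ≤ K := by
      have h : (Subgroup.closure (S : Set H)).map H.subtype ≤ K := by
        rw [MonoidHom.map_closure]
        apply Subgroup.closure_mono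
        rw [Finset.coe_union, Finset.coe_image]
        exact Set.subset_union_left
      rwa [hSgen, ← MonoidHom.range_eq_map, Subgroup.range_subtype] at h
    have hmap : K.map (QuotientGroup.mk' H.normalCore) = ⊤ := by
      rw [eq_top_iff, ← hTgen, Subgroup.closure_le]
      intro t ht
      refine ⟨t.out, Subgroup.subset_closure ?_, QuotientGroup.out_eq' t⟩
      exact Finset.mem_coe.2 (Finset.mem_union_right _ (Finset.mem_image_of_mem _ ht))
    have hker : (QuotientGroup.mk' H.normalCore).ker ≤ K := by
      rw [QuotientGroup.ker_mk']
      exact H.normalCore_le.trans hHK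
    rw [← Subgroup.comap_map_eq_self hker, hmap, Subgroup.comap_top]
end

section
/- Let G be a group, let N be a normal subgroup of G, and let a and b be natural numbers. Suppose that every subgroup of N is generated by at most a elements, and every subgroup of the quotient group G/N is generated by at most b elements. Then every subgroup of G is generated by at most a + b elements. -/
/-!
For a subgroup `K` of `G`, take at most `a` generators of `K ⊓ N` and lift at most `b` generators
of the image of `K` in `G ⧸ N` to elements of `K`. The subgroup `L ≤ K` generated by all of these
contains `K ⊓ N` and has the same image in `G ⧸ N` as `K`, hence `L = K`.
-/

/-- Let `G` be a group and `N` a normal subgroup. If every subgroup of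
`N` is generated by at most `a` elements and every subgroup of `G/N` is generated by at
most `b` elements, then every subgroup of `G` is generated by at most `a + b` elements. -/
theorem stmt11 (G : Type*) [Group G] (N : Subgroup G) (hN : N.Normal) (a b : ℕ)
    (ha : ∀ K : Subgroup N, ∃ S : Finset N, S.card ≤ a ∧ Subgroup.closure (S : Set N) = K)
    (hb : ∀ K : Subgroup (G ⧸ N), ∃ S : Finset (G ⧸ N), S.card ≤ b ∧
      Subgroup.closure (S : Set (G ⧸ N)) = K) :
    ∀ K : Subgroup G, ∃ S : Finset G, S.card ≤ a + b ∧ Subgroup.closure (S : Set G) = K := by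
  classical
  intro K
  obtain ⟨S, hS, hSK⟩ := ha (K.subgroupOf N)
  obtain ⟨T, hT, hTK⟩ := hb (K.map (QuotientGroup.mk' N))
  have hlift : ∀ t : G ⧸ N, ∃ g : G, t ∈ T → g ∈ K ∧ QuotientGroup.mk' N g = t := by
    intro t
    by_cases ht : t ∈ T
    · have h : t ∈ K.map (QuotientGroup.mk' N) := hTK ▸ Subgroup.subset_closure ht
      obtain ⟨g, hg, rfl⟩ := h
      exact ⟨g, fun _ => ⟨hg, rfl⟩⟩
    · exact ⟨1, fun h => absurd h ht⟩
  choose f hf using hlift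
  set L := Subgroup.closure ((S.image N.subtype ∪ T.image f : Finset G) : Set G)
  have hLK : L ≤ K := by
    rw [Subgroup.closure_le]
    intro x hx
    rcases Finset.mem_union.mp (Finset.mem_coe.mp hx) with h | h
    · obtain ⟨n, hn, rfl⟩ := Finset.mem_image.mp h
      have h' : n ∈ K.subgroupOf N := hSK ▸ Subgroup.subset_closure hn
      exact h'
    · obtain ⟨t, ht, rfl⟩ := Finset.mem_image.mp h
      exact (hf t ht).1
  refine ⟨S.image N.subtype ∪ T.image f, ?_, le_antisymm ?_ ?_⟩
  · exact (Finset.card_union_le _ _).trans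
      (add_le_add (Finset.card_image_le.trans hS) (Finset.card_image_le.trans hT))
  · exact hLK
  · intro x hx
    have hSL : K.subgroupOf N ≤ L.comap N.subtype := by
      rw [← hSK, Subgroup.closure_le]
      intro n hn
      exact Subgroup.subset_closure
        (Finset.mem_union_left _ (Finset.mem_image_of_mem N.subtype hn))
    have hTL : K.map (QuotientGroup.mk' N) ≤ L.map (QuotientGroup.mk' N) := by
      rw [← hTK, Subgroup.closure_le]
      intro t ht
      exact ⟨f t, Subgroup.subset_closure
        (Finset.mem_union_right _ (Finset.mem_image_of_mem f ht)), (hf t ht).2⟩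
    -- Correct `x` by an element `y` of `L` with the same image in `G ⧸ N`; then `y⁻¹ * x ∈ K ⊓ N`.
    obtain ⟨y, hy, hyx⟩ := hTL (Subgroup.mem_map_of_mem _ hx)
    have hn : y⁻¹ * x ∈ N := QuotientGroup.eq.mp hyx
    have hyx' : y⁻¹ * x ∈ L :=
      hSL (show (⟨y⁻¹ * x, hn⟩ : N) ∈ K.subgroupOf N from
        K.mul_mem (K.inv_mem (hLK hy)) hx)
    have hxL : x ∈ L := mul_inv_cancel_left y x ▸ L.mul_mem hy hyx'
    exact hxL
end

section
/- There exists a real constant C > 0 such that for every number field K of degree 2 over ℚ with D := |Δ_K| ≥ 16, where Δ_K is the discriminant of K, every Sylow 2-subgroup P of the ideal class group Cl(K) of the ring of integers of K satisfies d(P) ≤ C · log(D) / log(log(D)). -/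
/-!
Write `t` for the number of primes dividing the discriminant `Δ` of the quadratic field `K`. The
proof has three parts.

*Generation by torsion count* (`two_group_gen`). By the structure theorem, a finite abelian 2-group
is a product of `k` nontrivial cyclic 2-groups; it has `2 ^ k` elements killed by squaring and is
generated by `k` elements. So it suffices to bound the 2-torsion of the class group.

*Genus theory* (`two_torsion_card`). Let `I ^ 2 = (a)`, so that `N(a) = ± n ^ 2` with `n = N(I)`.
If the sign is `+` and `T` is the trace of `a`, then `a ^ 2 - T a + n ^ 2 = 0`, that is,
`(a + n) ^ 2 = (T + 2 n) a`; this is an explicit form of Hilbert 90. Removing the square part of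
the integer `T + 2 n`, the class of `I` contains an ideal `J` with `J ^ 2 = (m)`, where `m` is a
squarefree natural number (`mem_ambig_of_norm_pos`). Every prime dividing `m` ramifies, hence
divides `Δ` (`prime_dvd_discr`), and `m` determines `J`, so at most `2 ^ t` classes arise in this
way (`card_ambig`). The product of two classes with sign `-` has sign `+`, so the whole 2-torsion
has at most `2 ^ (t + 1)` elements.

*Counting primes* (`omega_bound`). With `L = log D`, at most `√L` primes are `≤ √L`, and the primes
dividing `D` that exceed `√L` number at most `L / log √L`, because their product is at most `D`.
-/

open NumberField nonZeroDivisors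

/-! ### Finite abelian 2-groups -/

/-- A finite abelian 2-group with at most `2 ^ r` elements killed by squaring is generated by at
most `r` elements. -/
theorem two_group_gen {G : Type*} [CommGroup G] [Finite G] (hG : IsPGroup 2 G) (r : ℕ)
    (hr : {g : G | g ^ 2 = 1}.ncard ≤ 2 ^ r) :
    ∃ S : Finset G, Subgroup.closure (S : Set G) = ⊤ ∧ S.card ≤ r := by
  classical
  obtain ⟨ι, _, n, hn, ⟨e⟩⟩ := CommGroup.equiv_prod_multiplicative_zmod_of_finite G
  have hev : ∀ i, 2 ∣ n i := by
    intro i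
    have hne : ∀ i, NeZero (n i) := fun i => ⟨by have := hn i; omega⟩
    let g : (i : ι) → Multiplicative (ZMod (n i)) := Pi.mulSingle i (Multiplicative.ofAdd 1)
    obtain ⟨k, hk⟩ := hG (e.symm g)
    have h1 : g ^ 2 ^ k = 1 := by
      rw [← map_pow] at hk
      exact (MulEquiv.map_eq_one_iff e.symm).mp hk
    have h2 := congrFun h1 i
    simp only [g, Pi.pow_apply, Pi.mulSingle_eq_same, Pi.one_apply, ← ofAdd_nsmul] at h2
    have h3 : ((2 ^ k : ℕ) : ZMod (n i)) = 0 := by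
      have := congrArg Multiplicative.toAdd h2
      simpa using this
    rw [ZMod.natCast_eq_zero_iff, Nat.dvd_prime_pow Nat.prime_two] at h3
    obtain ⟨j, -, hj⟩ := h3
    have hj0 : j ≠ 0 := by
      rintro rfl
      have := hn i
      simp at hj
      omega
    rw [hj]
    exact dvd_pow_self 2 hj0
  -- Subsets of `ι` inject into the 2-torsion through the unique element of order 2 of each factor.
  let f : Finset ι → G := fun s => e.symm fun i =>
    if i ∈ s then Multiplicative.ofAdd ((n i / 2 : ℕ) : ZMod (n i)) else 1
  have hhalf : ∀ i, ((n i / 2 : ℕ) : ZMod (n i)) ≠ 0 := by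
    intro i h
    rw [ZMod.natCast_eq_zero_iff] at h
    have := Nat.le_of_dvd (by have := hn i; omega) h
    have := hn i
    omega
  have hcard : Fintype.card ι ≤ r := by
    rw [← Nat.pow_le_pow_iff_right (a := 2) one_lt_two, ← Fintype.card_finset,
      ← Nat.card_eq_fintype_card, ← Set.ncard_univ]
    refine le_trans (Set.ncard_le_ncard_of_injOn f ?_ ?_ (Set.toFinite _)) hr
    · intro s _
      simp only [Set.mem_ofPred_eq, f]
      rw [← map_pow, MulEquiv.map_eq_one_iff]
      ext i
      simp only [Pi.pow_apply, Pi.one_apply]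
      split_ifs
      · rw [← ofAdd_nsmul, nsmul_eq_mul, ← Nat.cast_mul, Nat.mul_div_cancel' (hev i)]
        simp
      · simp
    · intro s _ t _ hst
      have h := e.symm.injective hst
      ext i
      have hi := congrFun h i
      have hne : Multiplicative.ofAdd ((n i / 2 : ℕ) : ZMod (n i)) ≠ 1 := by
        rw [Ne, ofAdd_eq_one]; exact hhalf i
      by_cases h1 : i ∈ s <;> by_cases h2 : i ∈ t <;> simp_all
  let gen : ι → G := fun i => e.symm (Pi.mulSingle i (Multiplicative.ofAdd 1))
  refine ⟨Finset.univ.image gen, ?_, Finset.card_image_le.trans hcard⟩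
  rw [eq_top_iff]
  intro g _
  have hg : g = ∏ i, gen i ^ ((e g i).toAdd.val) := by
    apply e.injective
    rw [map_prod]
    ext i
    have hne : NeZero (n i) := ⟨by have := hn i; omega⟩
    rw [Finset.prod_apply, Finset.prod_eq_single i]
    · simp only [gen, map_pow, MulEquiv.apply_symm_apply, Pi.pow_apply, Pi.mulSingle_eq_same]
      rw [← ofAdd_nsmul]
      simp
    · intro j _ hj
      simp [gen, Pi.mulSingle_eq_of_ne hj.symm]
    · simp
  rw [hg]
  exact Subgroup.prod_mem _ fun i _ => Subgroup.pow_mem _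
    (Subgroup.subset_closure (by simp)) _

/-- The hypothesis says that the 2-torsion outside `H` lies in a single translate of `H`. The set
`H` need not be a subgroup. -/
theorem card_le_two_mul {G : Type*} [CommGroup G] [Finite G] (H : Set G)
    (hH : ∀ x y : G, x ^ 2 = 1 → y ^ 2 = 1 → x ∉ H → y ∉ H → x * y ∈ H) :
    {g : G | g ^ 2 = 1}.ncard ≤ 2 * H.ncard := by
  by_cases h : ∃ x : G, x ^ 2 = 1 ∧ x ∉ H
  · obtain ⟨x, hx, hxH⟩ := h
    calc {g : G | g ^ 2 = 1}.ncard ≤ (H ∪ (fun y => x⁻¹ * y) '' H).ncard := by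
          refine Set.ncard_le_ncard ?_ (Set.toFinite _)
          intro y hy
          by_cases hyH : y ∈ H
          · exact Or.inl hyH
          · exact Or.inr ⟨x * y, hH x y hx hy hxH hyH, by simp⟩
      _ ≤ H.ncard + ((fun y => x⁻¹ * y) '' H).ncard := Set.ncard_union_le _ _
      _ ≤ 2 * H.ncard := by
          have := Set.ncard_image_le (f := fun y => x⁻¹ * y) (Set.toFinite H)
          omega
  · push Not at h
    have := Set.ncard_le_ncard (s := {g : G | g ^ 2 = 1}) (t := H) h (Set.toFinite _)
    omega

/-! ### Number of prime divisors -/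

/-- `ω(D) + 1 = O(log D / log log D)`; the extra `1` absorbs the contribution of the sign of the
norm to the 2-torsion of the class group. -/
theorem omega_bound (D : ℕ) (hD : 16 ≤ D) :
    ((D.primeFactors.card + 1 : ℕ) : ℝ) ≤
      10 * Real.logb 2 D / Real.logb 2 (Real.logb 2 D) := by
  classical
  set L := Real.logb 2 D with hL
  have hD0 : (0 : ℝ) < D := by exact_mod_cast (by omega : 0 < D)
  have hL4 : 4 ≤ L := by
    rw [hL, Real.le_logb_iff_rpow_le one_lt_two hD0]
    norm_num
    exact_mod_cast hD
  set y := Real.sqrt L with hy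
  have hy2 : 2 ≤ y := Real.le_sqrt_of_sq_le (by norm_num; exact hL4)
  have hyy : y ^ 2 = L := Real.sq_sqrt (by linarith)
  have hy0 : 0 < y := by linarith
  have hlogL : Real.logb 2 L = 2 * Real.logb 2 y := by
    rw [← hyy, Real.logb_pow]; norm_num
  set l := Real.logb 2 y with hl
  have hl1 : 1 ≤ l := by
    rw [hl, Real.le_logb_iff_rpow_le one_lt_two hy0]; simpa using hy2
  have hly : l ≤ 2 * y := by
    rw [hl, Real.logb, div_le_iff₀ (Real.log_pos one_lt_two)]
    have h1 := Real.log_le_sub_one_of_pos hy0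
    have h2 := Real.log_two_gt_d9
    nlinarith
  set A := D.primeFactors.filter (fun p : ℕ => (p : ℝ) ≤ y) with hA
  set B := D.primeFactors.filter (fun p : ℕ => ¬ (p : ℝ) ≤ y) with hB
  have hAB : A.card + B.card = D.primeFactors.card := Finset.card_filter_add_card_filter_not _
  have hAy : (A.card : ℝ) ≤ y := by
    have : A ⊆ Finset.Icc 1 ⌊y⌋₊ := by
      intro p hp
      rw [hA, Finset.mem_filter] at hp
      rw [Finset.mem_Icc]
      exact ⟨(Nat.prime_of_mem_primeFactors hp.1).one_le, Nat.le_floor hp.2⟩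
    have := Finset.card_le_card this
    rw [Nat.card_Icc, Nat.add_sub_cancel] at this
    exact le_trans (by exact_mod_cast this) (Nat.floor_le hy0.le)
  have hBl : (B.card : ℝ) * l ≤ L := by
    have h1 : y ^ B.card ≤ D := by
      calc y ^ B.card = ∏ p ∈ B, y := by simp
        _ ≤ ∏ p ∈ B, (p : ℝ) := by
          refine Finset.prod_le_prod (fun _ _ => hy0.le) fun p hp => ?_
          rw [hB, Finset.mem_filter] at hp
          exact (not_le.mp hp.2).le
        _ ≤ D := by
          rw [← Nat.cast_prod]
          exact_mod_cast Nat.le_of_dvd (by omega)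
            ((Finset.prod_dvd_prod_of_subset _ _ _ (Finset.filter_subset _ _)).trans
              (Nat.prod_primeFactors_dvd D))
    have h2 := Real.logb_le_logb_of_le one_lt_two (by positivity) h1
    rwa [Real.logb_pow] at h2
  rw [hlogL, le_div_iff₀ (by linarith), ← hAB]
  push_cast
  have h3 : (A.card : ℝ) * l ≤ y * (2 * y) := mul_le_mul hAy hly (by linarith) hy0.le
  nlinarith


/-! ### Ramified primes and ambiguous classes -/

/-- Cayley–Hamilton for multiplication by `a` on the rank two `ℤ`-module `𝓞 K`; the integer `T` is
the trace of `a`. -/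
theorem quad_eq (K : Type) [Field K] [NumberField K] (h2 : Module.finrank ℚ K = 2) (a : 𝓞 K) :
    ∃ T : ℤ, a ^ 2 - (T : 𝓞 K) * a + ((Algebra.norm ℤ a : ℤ) : 𝓞 K) = 0 := by
  classical
  let b := RingOfIntegers.basis K
  have hcard : Fintype.card (Module.Free.ChooseBasisIndex ℤ (𝓞 K)) = 2 := by
    rw [← Module.finrank_eq_card_chooseBasisIndex, RingOfIntegers.rank, h2]
  set M := Algebra.leftMulMatrix b a with hM
  refine ⟨M.trace, Algebra.leftMulMatrix_injective b ?_⟩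
  have h := Matrix.aeval_self_charpoly M
  rw [Matrix.charpoly_of_card_eq_two M hcard] at h
  rw [Algebra.norm_eq_matrix_det b, ← hM]
  simpa [← hM] using h

/-- If `p` divides `m` exactly once and `(m)` is a square of an ideal, then a prime `P` above `p`
satisfies `P ^ 2 ∣ (p)`, so it divides the different. -/
theorem prime_dvd_discr (K : Type) [Field K] [NumberField K] {m p : ℕ} (hm : Squarefree m)
    {J : Ideal (𝓞 K)} (hJ : J ^ 2 = Ideal.span {(m : 𝓞 K)}) (hp : p.Prime) (hpm : p ∣ m) :
    p ∣ (discr K).natAbs := by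
  have hpi : Prime (p : ℤ) := Nat.prime_iff_prime_int.mp hp
  rw [← Int.natCast_dvd]
  by_contra hnd
  rw [not_dvd_discr_iff_forall_mem K (𝓞 K) hpi] at hnd
  have hpO : (p : 𝓞 K) ≠ 0 := by exact_mod_cast hp.ne_zero
  obtain ⟨k, rfl⟩ := hpm
  have hpk : p.Coprime k := Nat.coprime_of_squarefree_mul hm
  have hpu : Ideal.span {(p : 𝓞 K)} ≠ ⊤ := by
    intro h
    have := Ideal.absNorm_span_natCast (S := 𝓞 K) p
    rw [h, Ideal.absNorm_top, eq_comm, Nat.pow_eq_one] at this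
    rcases this with h | h
    · exact hp.one_lt.ne' h
    · rw [RingOfIntegers.rank] at h
      exact Module.finrank_pos.ne' h
  obtain ⟨P, hPmax, hP⟩ := Ideal.exists_le_maximal _ hpu
  have hpP : (p : 𝓞 K) ∈ P := hP (Ideal.mem_span_singleton_self _)
  have hPp := hPmax.isPrime
  have hP0 : P ≠ ⊥ := fun h => hpO (by simpa [h] using hpP)
  have hkP : (k : 𝓞 K) ∉ P := by
    intro hk
    have hc : IsCoprime (p : 𝓞 K) (k : 𝓞 K) := by
      have := (Nat.isCoprime_iff_coprime.mpr hpk).map (Int.castRingHom (𝓞 K))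
      simpa using this
    obtain ⟨u, v, huv⟩ := hc
    exact hPmax.ne_top ((Ideal.eq_top_iff_one _).mpr
      (huv ▸ P.add_mem (P.mul_mem_left u hpP) (P.mul_mem_left v hk)))
  have hJP : J ≤ P := by
    refine hPp.le_of_pow_le (n := 2) ?_
    rw [hJ, Ideal.span_singleton_le_iff_mem]
    push_cast
    exact P.mul_mem_right _ hpP
  have hdvd : P ^ 2 ∣ Ideal.span {(p : 𝓞 K)} * Ideal.span {(k : 𝓞 K)} := by
    rw [Ideal.span_singleton_mul_span_singleton, ← Nat.cast_mul, ← hJ]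
    exact pow_dvd_pow_of_dvd (Ideal.dvd_iff_le.mpr hJP) 2
  have hdvd' : P ^ 2 ∣ Ideal.span {(p : 𝓞 K)} :=
    (Ideal.prime_of_isPrime hP0 hPp).pow_dvd_of_dvd_mul_right 2
      (by rwa [Ideal.dvd_span_singleton]) hdvd
  have hun := hnd P hPp (by simpa using hpP)
  rw [← not_dvd_differentIdeal_iff] at hun
  apply hun
  have : (Ideal.span {(p : ℤ)}).IsMaximal :=
    ((Ideal.span_singleton_prime hpi.ne_zero).mpr hpi).isMaximal (by simpa using hp.ne_zero)
  have := pow_sub_one_dvd_differentIdeal ℤ P 2 (p := Ideal.span {(p : ℤ)})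
    (by simpa using hp.ne_zero) (by simpa [Ideal.map_span] using hdvd')
  simpa using this

/-- The ideal classes containing an integral ideal whose square is generated by a squarefree natural
number. -/
def ambig (K : Type) [Field K] [NumberField K] : Set (ClassGroup (𝓞 K)) :=
  {c | ∃ J : (Ideal (𝓞 K))⁰, ∃ m : ℕ, Squarefree m ∧
    (J : Ideal (𝓞 K)) ^ 2 = Ideal.span {(m : 𝓞 K)} ∧ ClassGroup.mk0 J = c}

/-- The ideal `J` is determined by `J ^ 2 = (m)`, and the squarefree `m` by its set of prime factors,
which is a subset of the prime factors of the discriminant. -/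
theorem card_ambig (K : Type) [Field K] [NumberField K] :
    (ambig K).ncard ≤ 2 ^ (discr K).natAbs.primeFactors.card := by
  classical
  choose! J m hm hJ hc using fun (c : ClassGroup (𝓞 K)) (h : c ∈ ambig K) => h
  rw [← Finset.card_powerset, ← Set.ncard_coe_finset]
  refine Set.ncard_le_ncard_of_injOn (fun c => (m c).primeFactors) ?_ ?_ (Finset.finite_toSet _)
  · intro c h
    simp only [Finset.coe_powerset, Set.mem_preimage, Set.mem_powerset_iff, Finset.coe_subset]
    intro p hp
    rw [Nat.mem_primeFactors] at hp ⊢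
    exact ⟨hp.1, prime_dvd_discr K (hm c h) (hJ c h) hp.1 hp.2.1,
      by simpa using discr_ne_zero K⟩
  · intro c h c' h' heq
    have hmm : m c = m c' := by
      rw [← Nat.prod_primeFactors_of_squarefree (hm c h),
        ← Nat.prod_primeFactors_of_squarefree (hm c' h')]
      exact congrArg (fun s : Finset ℕ => ∏ p ∈ s, p) heq
    have h2 : (J c : Ideal (𝓞 K)) ^ 2 = (J c' : Ideal (𝓞 K)) ^ 2 := by
      rw [hJ c h, hJ c' h', hmm]
    have h3 : (J c : Ideal (𝓞 K)) = J c' := by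
      apply le_antisymm <;> rw [← Ideal.dvd_iff_le, ← UniqueFactorizationMonoid.pow_dvd_pow_iff_dvd two_ne_zero, h2]
    rw [← hc c h, ← hc c' h', Subtype.ext h3]

/-- The explicit Hilbert 90 step: a 2-torsion class `[I]` with `I ^ 2 = (a)` and `N(a) > 0` contains
an ideal whose square is generated by a squarefree natural number. -/
theorem mem_ambig_of_norm_pos (K : Type) [Field K] [NumberField K]
    (h2 : Module.finrank ℚ K = 2) (I : (Ideal (𝓞 K))⁰) (a : 𝓞 K)
    (ha : (I : Ideal (𝓞 K)) ^ 2 = Ideal.span {a}) (hN : 0 < Algebra.norm ℤ a) :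
    ClassGroup.mk0 I ∈ ambig K := by
  obtain ⟨T, hT⟩ := quad_eq K h2 a
  have hI0 : (I : Ideal (𝓞 K)) ≠ ⊥ := nonZeroDivisors.coe_ne_zero I
  have ha0 : a ≠ 0 := by
    rintro rfl
    exact hI0 (pow_eq_zero_iff two_ne_zero |>.mp (by simpa using ha))
  set n : ℕ := Ideal.absNorm (I : Ideal (𝓞 K)) with hn
  have hNn : Algebra.norm ℤ a = (n : ℤ) ^ 2 := by
    have := congrArg Ideal.absNorm ha
    rw [map_pow, Ideal.absNorm_span_singleton] at this
    rw [← Int.natAbs_of_nonneg hN.le, ← this]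
    push_cast
    rfl
  rw [hNn] at hT
  -- Up to squares in `K`, the generator `a` is the rational integer `r`.
  have key : ∃ (x : 𝓞 K) (r : ℤ), x ≠ 0 ∧ x ^ 2 = r * a := by
    by_cases h : T + 2 * n = 0
    -- Here `a + n = 0`, so `a` itself is a rational integer.
    · have hTn : T = -(2 * n) := by linarith
      have : (a + n) ^ 2 = 0 := by
        rw [hTn] at hT
        push_cast at hT
        linear_combination hT
      have h3 : a = -(n : 𝓞 K) := by
        have := pow_eq_zero_iff (two_ne_zero) |>.mp this
        linear_combination this
      exact ⟨a, -n, ha0, by push_cast; rw [sq]; nth_rw 1 [h3]⟩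
    · refine ⟨a + n, T + 2 * n, fun h0 => ?_, ?_⟩
      · have : (a + n) ^ 2 = ((T + 2 * n : ℤ) : 𝓞 K) * a := by
          push_cast at hT ⊢
          linear_combination hT
        rw [h0, zero_pow two_ne_zero, eq_comm, mul_eq_zero] at this
        rcases this with h' | h'
        · exact h (by exact_mod_cast h')
        · exact ha0 h'
      · push_cast at hT ⊢
        linear_combination hT
  obtain ⟨x, r, hx0, hx⟩ := key
  obtain ⟨m, s, hms, hsq⟩ := Nat.sq_mul_squarefree r.natAbs
  have hs0 : s ≠ 0 := by
    rintro rfl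
    have : r = 0 := by simpa using hms.symm
    rw [this] at hx
    simp at hx
    exact hx0 hx
  have hrspan : Ideal.span {(r : 𝓞 K)} = Ideal.span {(s : 𝓞 K)} ^ 2 * Ideal.span {(m : 𝓞 K)} := by
    rw [Ideal.span_singleton_pow, Ideal.span_singleton_mul_span_singleton]
    rw [show (s : 𝓞 K) ^ 2 * m = ((r.natAbs : ℕ) : 𝓞 K) by rw [← hms]; push_cast; rfl]
    rw [Ideal.span_singleton_eq_span_singleton]
    rcases Int.natAbs_eq r with h | h
    · nth_rw 1 [h]; simp
    · nth_rw 1 [h]; simp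
  have hx2 : Ideal.span {x} ^ 2 = (Ideal.span {(s : 𝓞 K)} * I) ^ 2 * Ideal.span {(m : 𝓞 K)} := by
    rw [Ideal.span_singleton_pow, hx, ← Ideal.span_singleton_mul_span_singleton, hrspan, ← ha]
    ring
  have hd : (Ideal.span {(s : 𝓞 K)} * I) ∣ Ideal.span {x} := by
    rw [← UniqueFactorizationMonoid.pow_dvd_pow_iff_dvd two_ne_zero, hx2]
    exact Dvd.intro _ rfl
  -- This `J` represents the inverse of the class of `I`, which is the class itself.
  obtain ⟨J, hJ⟩ := hd
  have hsI : Ideal.span {(s : 𝓞 K)} * (I : Ideal (𝓞 K)) ≠ 0 :=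
    mul_ne_zero (by simpa using hs0) hI0
  have hJ0 : J ≠ 0 := by
    rintro rfl
    simp at hJ
    exact hx0 hJ
  have hJ2 : J ^ 2 = Ideal.span {(m : 𝓞 K)} := by
    rw [hJ, mul_pow] at hx2
    exact mul_left_cancel₀ (pow_ne_zero 2 hsI) hx2
  let J' : (Ideal (𝓞 K))⁰ := ⟨J, mem_nonZeroDivisors_of_ne_zero hJ0⟩
  refine ⟨J', m, hsq, hJ2, ?_⟩
  have hIJ : ClassGroup.mk0 J' * ClassGroup.mk0 I = 1 := by
    let s' : (Ideal (𝓞 K))⁰ := ⟨Ideal.span {(s : 𝓞 K)},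
      mem_nonZeroDivisors_of_ne_zero (by simpa using hs0)⟩
    have h1 : ClassGroup.mk0 s' = 1 := (ClassGroup.mk0_eq_one_iff _).mpr ⟨⟨s, rfl⟩⟩
    have h2 : ClassGroup.mk0 (s' * I * J') = 1 :=
      (ClassGroup.mk0_eq_one_iff (s' * I * J').2).mpr ⟨⟨x, hJ.symm⟩⟩
    rwa [map_mul, map_mul, h1, one_mul, mul_comm] at h2
  have hJJ : ClassGroup.mk0 J' * ClassGroup.mk0 J' = 1 := by
    rw [mul_eq_one_iff_eq_inv, ClassGroup.mk0_eq_mk0_inv_iff]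
    exact ⟨m, by exact_mod_cast hsq.ne_zero, by rw [← sq]; exact hJ2⟩
  exact mul_left_cancel (hJJ.trans hIJ.symm)

/-- A 2-torsion class outside `ambig K` is represented by an ideal whose square has a generator of
negative norm. -/
theorem exists_sq_eq_span (K : Type) [Field K] [NumberField K] (h2 : Module.finrank ℚ K = 2)
    {c : ClassGroup (𝓞 K)} (hc : c ^ 2 = 1) (hcH : c ∉ ambig K) :
    ∃ (I : (Ideal (𝓞 K))⁰) (a : 𝓞 K), ClassGroup.mk0 I = c ∧
      (I : Ideal (𝓞 K)) ^ 2 = Ideal.span {a} ∧ Algebra.norm ℤ a < 0 := by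
  obtain ⟨I, rfl⟩ := ClassGroup.mk0_surjective c
  have hpr : ((I : Ideal (𝓞 K)) ^ 2).IsPrincipal := by
    rw [← ClassGroup.mk0_eq_one_iff (pow_mem I.2 2), ← hc, ← map_pow]
    exact congrArg _ (Subtype.ext rfl)
  obtain ⟨a, ha'⟩ := (Submodule.isPrincipal_iff _).mp hpr
  rw [Ideal.submodule_span_eq] at ha'
  refine ⟨I, a, rfl, ha', ?_⟩
  have ha0 : a ≠ 0 := by
    rintro rfl
    exact nonZeroDivisors.coe_ne_zero I (pow_eq_zero_iff two_ne_zero |>.mp (by simpa using ha'))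
  have hN : Algebra.norm ℤ a ≠ 0 := Algebra.norm_ne_zero_iff.mpr ha0
  by_contra hlt
  exact hcH (mem_ambig_of_norm_pos K h2 I a ha' (by omega))

theorem two_torsion_card (K : Type) [Field K] [NumberField K] (h2 : Module.finrank ℚ K = 2) :
    {c : ClassGroup (𝓞 K) | c ^ 2 = 1}.ncard ≤ 2 ^ ((discr K).natAbs.primeFactors.card + 1) := by
  refine (card_le_two_mul (ambig K) fun x y hx hy hxH hyH => ?_).trans ?_
  · obtain ⟨I, a, rfl, ha, hNa⟩ := exists_sq_eq_span K h2 hx hxH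
    obtain ⟨J, b, rfl, hb, hNb⟩ := exists_sq_eq_span K h2 hy hyH
    rw [← map_mul]
    refine mem_ambig_of_norm_pos K h2 (I * J) (a * b) ?_ ?_
    · rw [Submonoid.coe_mul, mul_pow, ha, hb, Ideal.span_singleton_mul_span_singleton]
    · rw [map_mul]
      exact mul_pos_of_neg_of_neg hNa hNb
  · rw [pow_succ']
    exact Nat.mul_le_mul_left 2 (card_ambig K)

/-! ### The rank bound -/

/-- There is a constant `C > 0` such that for every number field `K` of
degree 2 over `ℚ` with `D := |Δ_K| ≥ 16`, every Sylow 2-subgroup `P` of the ideal class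
group of `K` is generated by at most `C · log D / log log D` elements (logs base 2). -/
theorem stmt13 : ∃ C : ℝ, 0 < C ∧
    ∀ (K : Type) [Field K] [NumberField K], Module.finrank ℚ K = 2 →
      16 ≤ (NumberField.discr K).natAbs →
      ∀ P : Sylow 2 (ClassGroup (NumberField.RingOfIntegers K)),
        ∃ S : Finset (ClassGroup (NumberField.RingOfIntegers K)),
          (S : Set (ClassGroup (NumberField.RingOfIntegers K))) ⊆
            ((P : Subgroup (ClassGroup (NumberField.RingOfIntegers K))) :
              Set (ClassGroup (NumberField.RingOfIntegers K))) ∧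
          Subgroup.closure (S : Set (ClassGroup (NumberField.RingOfIntegers K)))
            = (P : Subgroup (ClassGroup (NumberField.RingOfIntegers K))) ∧
          (S.card : ℝ) ≤ C * Real.logb 2 ((NumberField.discr K).natAbs) /
            Real.logb 2 (Real.logb 2 ((NumberField.discr K).natAbs)) := by
  refine ⟨10, by norm_num, fun K _ _ h2 hD P => ?_⟩
  classical
  have htors : {g : P | g ^ 2 = 1}.ncard ≤
      2 ^ ((NumberField.discr K).natAbs.primeFactors.card + 1) := by
    refine le_trans ?_ (two_torsion_card K h2)
    refine Set.ncard_le_ncard_of_injOn Subtype.val ?_ Subtype.val_injective.injOn (Set.toFinite _)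
    intro g hg
    exact congrArg Subtype.val hg
  obtain ⟨S, hS, hcard⟩ := two_group_gen P.isPGroup' _ htors
  refine ⟨S.image Subtype.val, ?_, ?_, ?_⟩
  · intro x hx
    rw [Finset.coe_image] at hx
    obtain ⟨y, -, rfl⟩ := hx
    exact y.2
  · have h := congrArg (Subgroup.map (P : Subgroup (ClassGroup (𝓞 K))).subtype) hS
    rw [MonoidHom.map_closure, ← MonoidHom.range_eq_map, Subgroup.range_subtype] at h
    rw [Finset.coe_image]
    exact h
  · refine le_trans ?_ (omega_bound _ hD)
    exact_mod_cast Finset.card_image_le.trans hcard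
end

section
/- Let Γ' be a subgroup of SL_2(ℤ) which is a congruence subgroup, i.e., Γ' contains the principal congruence subgroup Γ(N) = ker(SL_2(ℤ) → SL_2(ℤ/Nℤ)) for some positive integer N, and suppose Γ' has finite index n in SL_2(ℤ). Then there exists a positive integer m with m ≤ n such that Γ(m) ⊆ Γ'. -/
/-!
The idea is that some parabolic one-parameter subgroup of `SL₂(ℤ)` meets `Γ'` exactly in its
`N`-th powers, where `N` is the least positive integer with `Γ(N) ≤ Γ'`; the first `N` elements
of that one-parameter subgroup then lie in distinct cosets of `Γ'`, so `N ≤ n`.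

For integers `x, y` let `P(x,y,s) = 1 + s·E` with `E = [[-xy, x²], [-y², xy]]`. Since `E² = 0`,
this is a homomorphism in `s`. Let `p` be a prime factor of `N` and `d = N / p`. The group `Γ(d)`
is generated modulo `Γ(N)` by the three elements `P(1,0,d)`, `P(0,1,d)`, `P(1,-1,d)`
(`Gamma_le_of_parabolic_mem`), so by minimality of `N` one of them is not in `Γ'`. Modulo `N` the
matrix `P(x,y,d)` only depends on `x, y` modulo `p` (`parabolic_congr`). Hence the Chinese
remainder theorem yields one pair `(x, y)` with `P(x,y,N/p) ∉ Γ'` for all primes `p ∣ N` at once,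
while `P(x,y,N) ∈ Γ(N) ≤ Γ'`. So `P(x,y,k) ∈ Γ'` only when `N ∣ k`.
-/

namespace CongruenceLevel

open Matrix MatrixGroups CongruenceSubgroup

/-- The matrix `1 + s·E`, where `E = [[-xy, x²], [-y², xy]]` squares to zero. For coprime `x, y`
it is the conjugate of `[[1, s], [0, 1]]` that fixes the cusp `x / y`; coprimality is not
needed. -/
def parabolic (x y s : ℤ) : SL(2, ℤ) :=
  ⟨!![1 - s * x * y, s * x ^ 2; -(s * y ^ 2), 1 + s * x * y], by
    rw [det_fin_two_of]; ring⟩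

lemma coe_parabolic (x y s : ℤ) : (parabolic x y s : Matrix (Fin 2) (Fin 2) ℤ) =
    !![1 - s * x * y, s * x ^ 2; -(s * y ^ 2), 1 + s * x * y] := rfl

lemma dvd_sub_one_of_mem_Gamma {d : ℕ} {A : SL(2, ℤ)} (hA : A ∈ Γ(d)) :
    (d : ℤ) ∣ A 0 0 - 1 := by
  rw [← ZMod.intCast_zmod_eq_zero_iff_dvd, Int.cast_sub, (Gamma_mem.1 hA).1, Int.cast_one,
    sub_self]

lemma parabolic_self_mem_Gamma (x y : ℤ) (N : ℕ) : parabolic x y N ∈ Γ(N) := by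
  simp [Gamma_mem, coe_parabolic]

lemma parabolic_add (x y s t : ℤ) :
    parabolic x y (s + t) = parabolic x y s * parabolic x y t := by
  ext i j
  fin_cases i <;> fin_cases j <;>
    simp [coe_parabolic, Matrix.mul_apply, Fin.sum_univ_two] <;> ring

lemma parabolic_zero (x y : ℤ) : parabolic x y 0 = 1 := by
  ext i j
  fin_cases i <;> fin_cases j <;> simp [coe_parabolic]

/-- `s ↦ parabolic x y s` as a homomorphism. -/
def parabolicHom (x y : ℤ) : Multiplicative ℤ →* SL(2, ℤ) where
  toFun s := parabolic x y s.toAdd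
  map_one' := parabolic_zero x y
  map_mul' s t := parabolic_add x y s.toAdd t.toAdd

/-- The exponents `s` with `parabolic x y s ∈ H`. -/
def exponents (H : Subgroup SL(2, ℤ)) (x y : ℤ) : AddSubgroup ℤ :=
  Subgroup.toAddSubgroup' (H.comap (parabolicHom x y))

lemma mem_exponents {H : Subgroup SL(2, ℤ)} {x y s : ℤ} :
    s ∈ exponents H x y ↔ parabolic x y s ∈ H := Iff.rfl

lemma parabolic_mul_mem {H : Subgroup SL(2, ℤ)} {x y s : ℤ} (h : parabolic x y s ∈ H) (k : ℤ) :
    parabolic x y (s * k) ∈ H := by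
  have := (exponents H x y).zsmul_mem (mem_exponents.2 h) k
  rwa [smul_eq_mul, mul_comm, mem_exponents] at this

lemma mem_iff_of_congr {N : ℕ} {H : Subgroup SL(2, ℤ)} (hN : Γ(N) ≤ H) {A B : SL(2, ℤ)}
    (h : ∀ i j, ((A i j : ℤ) : ZMod N) = ((B i j : ℤ) : ZMod N)) : A ∈ H ↔ B ∈ H := by
  have hm : SpecialLinearGroup.map (Int.castRingHom (ZMod N)) A =
      SpecialLinearGroup.map (Int.castRingHom (ZMod N)) B := by
    ext i j; simpa using h i j
  have hk : A⁻¹ * B ∈ H := hN (by rw [Gamma_mem', map_mul, map_inv, hm, inv_mul_cancel])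
  constructor
  · intro hA; simpa using H.mul_mem hA hk
  · intro hB; simpa using H.mul_mem hB (H.inv_mem hk)

/-- Modulo `d * p`, the matrix `parabolic x y d` only depends on `x` and `y` modulo `p`. -/
lemma parabolic_congr {d p : ℕ} {x y x' y' : ℤ} (hx : (p : ℤ) ∣ x - x') (hy : (p : ℤ) ∣ y - y')
    (i j : Fin 2) : ((parabolic x y d i j : ℤ) : ZMod (d * p)) =
      ((parabolic x' y' d i j : ℤ) : ZMod (d * p)) := by
  obtain ⟨u, hu⟩ := hx
  obtain ⟨v, hv⟩ := hy
  obtain rfl : x = x' + p * u := by linarith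
  obtain rfl : y = y' + p * v := by linarith
  rw [← sub_eq_zero, ← Int.cast_sub, ZMod.intCast_zmod_eq_zero_iff_dvd]
  push_cast
  fin_cases i <;> fin_cases j <;> simp [coe_parabolic]
  · exact ⟨-(x' * v + u * y' + p * u * v), by ring⟩
  · exact ⟨2 * x' * u + p * u ^ 2, by ring⟩
  · exact ⟨-(2 * y' * v + p * v ^ 2), by ring⟩
  · exact ⟨x' * v + u * y' + p * u * v, by ring⟩

/-- A matrix of `Γ(d)` whose top left entry `a` is invertible modulo `N` agrees modulo `N` with a
product of a lower unipotent matrix, `parabolic 1 (-1) (a - 1)` (whose top left entry is also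
`a`), and an upper unipotent matrix. -/
lemma mem_of_isCoprime {N d : ℕ} {H : Subgroup SL(2, ℤ)} (hN : Γ(N) ≤ H)
    (h1 : parabolic 1 0 d ∈ H) (h2 : parabolic 0 1 d ∈ H) (h3 : parabolic 1 (-1) d ∈ H)
    {A : SL(2, ℤ)} (hA : A ∈ Γ(d)) (ha : IsCoprime (A 0 0) (N : ℤ)) : A ∈ H := by
  have h00 := dvd_sub_one_of_mem_Gamma hA
  obtain ⟨-, h01, h10, -⟩ := Gamma_mem.1 hA
  rw [ZMod.intCast_zmod_eq_zero_iff_dvd] at h01 h10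
  obtain ⟨x, hx⟩ := h00
  obtain ⟨b, hb⟩ := h01
  obtain ⟨c, hc⟩ := h10
  obtain ⟨u, v, huv⟩ := ha
  have hCmem := H.mul_mem (H.mul_mem (parabolic_mul_mem h2 (-(u * (c + x))))
    (parabolic_mul_mem h3 x)) (parabolic_mul_mem h1 (u * (b - x)))
  refine (mem_iff_of_congr hN ?_).2 hCmem
  set C := parabolic 0 1 (d * -(u * (c + x))) * parabolic 1 (-1) (d * x) *
    parabolic 1 0 (d * (u * (b - x))) with hC
  have ha' : A 0 0 = 1 + d * x := by linarith
  have c00 : C 0 0 = A 0 0 := by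
    simp [hC, coe_parabolic, Matrix.mul_apply, Fin.sum_univ_two, ha']
  have c01 : C 0 1 = d * x + A 0 0 * (d * (u * (b - x))) := by
    simp [hC, coe_parabolic, Matrix.mul_apply, Fin.sum_univ_two, ha']; ring
  have c10 : C 1 0 = -(d * x) + A 0 0 * (d * (u * (c + x))) := by
    simp [hC, coe_parabolic, Matrix.mul_apply, Fin.sum_univ_two, ha']; ring
  have huv' : (u : ZMod N) * (A 0 0 : ℤ) = 1 := by
    have := congrArg (Int.cast : ℤ → ZMod N) huv
    simpa using this
  have e01 : ((A 0 1 : ℤ) : ZMod N) = (C 0 1 : ℤ) := by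
    rw [c01, hb]; push_cast
    linear_combination (-(d * (b - x)) : ZMod N) * huv'
  have e10 : ((A 1 0 : ℤ) : ZMod N) = (C 1 0 : ℤ) := by
    rw [c10, hc]; push_cast
    linear_combination (-(d * (c + x)) : ZMod N) * huv'
  have dA : ((A 0 0 : ℤ) : ZMod N) * (A 1 1 : ℤ) - (A 0 1 : ℤ) * (A 1 0 : ℤ) = 1 := by
    have := A.det_coe
    rw [det_fin_two] at this
    exact_mod_cast congrArg (Int.cast : ℤ → ZMod N) this
  have dC : ((C 0 0 : ℤ) : ZMod N) * (C 1 1 : ℤ) - (C 0 1 : ℤ) * (C 1 0 : ℤ) = 1 := by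
    have := C.det_coe
    rw [det_fin_two] at this
    exact_mod_cast congrArg (Int.cast : ℤ → ZMod N) this
  -- The last entry is determined by the determinant, as `A 0 0` is invertible modulo `N`.
  have e11 : ((A 1 1 : ℤ) : ZMod N) = (C 1 1 : ℤ) := by
    rw [c00, ← e01, ← e10] at dC
    linear_combination (u : ZMod N) * (dA - dC) -
      (((A 1 1 : ℤ) : ZMod N) - (C 1 1 : ℤ)) * huv'
  intro i j
  fin_cases i <;> fin_cases j
  · exact congrArg _ c00.symm
  · exact e01
  · exact e10
  · exact e11

/-- For `p` prime, `Γ(d)` is generated modulo `Γ(d * p)` by the three given parabolic elements. -/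
lemma Gamma_le_of_parabolic_mem {d p : ℕ} (hp : p.Prime) {H : Subgroup SL(2, ℤ)}
    (hN : Γ(d * p) ≤ H) (h1 : parabolic 1 0 d ∈ H) (h2 : parabolic 0 1 d ∈ H)
    (h3 : parabolic 1 (-1) d ∈ H) : Γ(d) ≤ H := by
  have hpZ : Prime (p : ℤ) := Nat.prime_iff_prime_int.1 hp
  have key : ∀ A ∈ Γ(d), ¬ (p : ℤ) ∣ A 0 0 → A ∈ H := by
    intro A hA hpA
    refine mem_of_isCoprime hN h1 h2 h3 hA ?_
    obtain ⟨x, hx⟩ := dvd_sub_one_of_mem_Gamma hA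
    rw [Nat.cast_mul]
    refine IsCoprime.mul_right ⟨1, -x, by linarith⟩ ?_
    exact ((Prime.coprime_iff_not_dvd hpZ).2 hpA).symm
  intro A hA
  by_cases hpA : (p : ℤ) ∣ A 0 0
  · -- Here `p` divides neither `d` nor `A 0 1`, so adding `-d` times the second column to the
    -- first makes the top left entry prime to `p`.
    have hAU := key _ (mul_mem hA (parabolic_self_mem_Gamma 0 1 d)) ?_
    · exact (H.mul_mem_cancel_right h2).1 hAU
    · have e : (A * parabolic 0 1 d) 0 0 = A 0 0 - A 0 1 * d := by
        simp [coe_parabolic, Matrix.mul_apply, Fin.sum_univ_two]; ring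
      rw [e, dvd_sub_right hpA]
      intro h
      rcases hpZ.dvd_or_dvd h with h | h
      · have hdet := A.det_coe
        rw [det_fin_two] at hdet
        exact hpZ.not_dvd_one (hdet ▸ dvd_sub (hpA.mul_right _) (h.mul_right _))
      · exact hpZ.not_dvd_one
          ((dvd_sub_right hpA).1 (h.trans (dvd_sub_one_of_mem_Gamma hA)))
  · exact key A hA hpA

/-- An additive subgroup of `ℤ` that contains `N` but no `N / p` with `p` prime is `Nℤ`. -/
lemma dvd_of_mem {N : ℕ} {S : AddSubgroup ℤ} (hNS : (N : ℤ) ∈ S)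
    (hS : ∀ d p : ℕ, p.Prime → N = d * p → (d : ℤ) ∉ S) {k : ℤ} (hk : k ∈ S) : (N : ℤ) ∣ k := by
  have hg : ((Int.gcd k N : ℕ) : ℤ) ∈ S := by
    rw [Int.gcd_eq_gcd_ab]
    exact S.add_mem (by simpa [mul_comm] using S.zsmul_mem hk (Int.gcdA k N))
      (by simpa [mul_comm] using S.zsmul_mem hNS (Int.gcdB k N))
  obtain ⟨q, hq⟩ : Int.gcd k N ∣ N := by exact_mod_cast Int.gcd_dvd_right k (N : ℤ)
  by_cases hq1 : q = 1
  · rw [hq1, mul_one] at hq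
    have := Int.gcd_dvd_left k (N : ℤ)
    rwa [← hq] at this
  · obtain ⟨p, hp, r, rfl⟩ := Nat.exists_prime_and_dvd hq1
    refine absurd ?_ (hS (Int.gcd k N * r) p hp (by rw [mul_assoc, mul_comm r p]; exact hq))
    push_cast
    simpa [mul_comm] using S.zsmul_mem hg (r : ℤ)

lemma exists_crt (N : ℕ) (f : ℕ → ℤ) :
    ∃ x : ℤ, ∀ p ∈ N.primeFactors, (p : ℤ) ∣ x - f p := by
  obtain ⟨x, hx⟩ := IsDedekindDomain.exists_forall_sub_mem_ideal (R := ℤ) (s := N.primeFactors)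
    (fun p ↦ Ideal.span {(p : ℤ)}) (fun _ ↦ 1)
    (fun p hp ↦ by
      have hpZ := Nat.prime_iff_prime_int.1 (Nat.prime_of_mem_primeFactors hp)
      rwa [Ideal.prime_span_singleton_iff])
    (fun p hp q hq hpq h ↦ hpq (by
      rw [Ideal.span_singleton_eq_span_singleton, Int.associated_iff_natAbs] at h
      simpa using h))
    (fun p ↦ f p)
  refine ⟨x, fun p hp ↦ ?_⟩
  simpa [Ideal.mem_span_singleton] using hx p hp

/-- If `N` is minimal with `Γ(N) ≤ H`, then some parabolic one-parameter subgroup meets `H` only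
in its `N`-th powers. -/
lemma exists_parabolic {N : ℕ} (hN : 0 < N) {H : Subgroup SL(2, ℤ)} (hNH : Γ(N) ≤ H)
    (hmin : ∀ d < N, 0 < d → ¬ Γ(d) ≤ H) :
    ∃ x y : ℤ, ∀ k, parabolic x y k ∈ H → (N : ℤ) ∣ k := by
  have hloc : ∀ p : ℕ, ∃ v : ℤ × ℤ, ∀ d, p.Prime → N = d * p → parabolic v.1 v.2 d ∉ H := by
    intro p
    by_contra! hcon
    obtain ⟨d, hp, rfl, h1⟩ := hcon (1, 0)
    have hval : ∀ v : ℤ × ℤ, parabolic v.1 v.2 d ∈ H := by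
      intro v
      obtain ⟨d', -, hd', h⟩ := hcon v
      rwa [Nat.eq_of_mul_eq_mul_right hp.pos hd']
    have hd : 0 < d := Nat.pos_of_mul_pos_right hN
    exact hmin d (lt_mul_of_one_lt_right hd hp.one_lt) hd
      (Gamma_le_of_parabolic_mem hp hNH h1 (hval (0, 1)) (hval (1, -1)))
  choose v hv using hloc
  obtain ⟨x, hx⟩ := exists_crt N fun p ↦ (v p).1
  obtain ⟨y, hy⟩ := exists_crt N fun p ↦ (v p).2
  refine ⟨x, y, fun k hk ↦ dvd_of_mem (S := exponents H x y) ?_ ?_ (mem_exponents.2 hk)⟩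
  · exact mem_exponents.2 (hNH (parabolic_self_mem_Gamma x y N))
  · rintro d p hp rfl hmem
    have hpm : p ∈ (d * p).primeFactors :=
      Nat.mem_primeFactors.2 ⟨hp, dvd_mul_left _ _, hN.ne'⟩
    exact hv p d hp rfl ((mem_iff_of_congr hNH (parabolic_congr (hx p hpm) (hy p hpm))).1
      (mem_exponents.1 hmem))

end CongruenceLevel

/-- Let `Γ'` be a congruence subgroup of `SL₂(ℤ)` (it contains the
principal congruence subgroup `Γ(N)` for some `N > 0`) of finite index `n`. Then there is a
positive integer `m ≤ n` with `Γ(m) ⊆ Γ'`. -/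
theorem stmt14 (Γ' : Subgroup (Matrix.SpecialLinearGroup (Fin 2) ℤ)) (n : ℕ)
    (hn : Γ'.index = n) (hfin : Γ'.FiniteIndex)
    (hcong : ∃ N : ℕ, 0 < N ∧
      MonoidHom.ker (Matrix.SpecialLinearGroup.map (n := Fin 2)
        (Int.castRingHom (ZMod N))) ≤ Γ') :
    ∃ m : ℕ, 0 < m ∧ m ≤ n ∧
      MonoidHom.ker (Matrix.SpecialLinearGroup.map (n := Fin 2)
        (Int.castRingHom (ZMod m))) ≤ Γ' := by
  classical
  obtain ⟨hpos, hle⟩ := Nat.find_spec hcong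
  set N := Nat.find hcong with hNdef
  obtain ⟨x, y, hxy⟩ := CongruenceLevel.exists_parabolic hpos hle
    (fun d hd hd0 h ↦ Nat.find_min hcong hd ⟨hd0, h⟩)
  refine ⟨N, hpos, ?_, hle⟩
  have hinj : Function.Injective fun i : Fin N ↦
      (CongruenceLevel.parabolic x y (i : ℕ) : Matrix.SpecialLinearGroup (Fin 2) ℤ ⧸ Γ') := by
    intro i j hij
    have hmem := QuotientGroup.eq.1 hij
    have hinv : (CongruenceLevel.parabolic x y (i : ℕ))⁻¹ *
        CongruenceLevel.parabolic x y (j : ℕ) =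
          CongruenceLevel.parabolic x y ((j : ℕ) - (i : ℕ) : ℤ) := by
      rw [inv_mul_eq_iff_eq_mul, ← CongruenceLevel.parabolic_add]
      congr 1; ring
    rw [hinv] at hmem
    have hdvd := Int.eq_zero_of_abs_lt_dvd (hxy _ hmem) (by rw [abs_lt]; omega)
    ext; omega
  have : Finite (Matrix.SpecialLinearGroup (Fin 2) ℤ ⧸ Γ') := Γ'.finite_quotient_of_finiteIndex
  have hcard := Nat.card_le_card_of_injective _ hinj
  rw [Nat.card_fin] at hcard
  exact hcard.trans_eq hn
end
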